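/- arXiv:1810.03335 — 4 statements merged into one kernel-verified Lean document; each statement's English description precedes it below -/
import Mathlib

section
/- Let C be a cocommutative rack bialgebra, T = T(Č) the tensor algebra on Č = ker ε equipped with the bialgebra structure extending the coproduct of C, and let J ⊆ T be the two-sided ideal generated by all elements i(y_{(1)}).i(x ◁ y_{(2)}) − i(x).i(y) for x, y ∈ C. Then J is also a coideal: Δ_T(J) ⊆ T ⊗ J + J ⊗ T and ε_T(J) = 0. -/
open TensorProduct

set_option maxHeartbeats 1000000

/-- A rack bialgebra over a field `k`: a counital coaugmented coalgebra
`(C, Δ, ε, 1)` together with a coalgebra morphism `◁ : C ⊗ C → C`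
(given here as a bilinear map `lhd`) which is self-distributive and satisfies
`x ◁ 1 = x`, `1 ◁ x = ε(x)·1` and `ε(x ◁ y) = ε(x)ε(y)`. -/
structure RackBialgebra (k C : Type) [Field k] [AddCommGroup C] [Module k C] where
  comul : C →ₗ[k] C ⊗[k] C
  counit : C →ₗ[k] k
  one : C
  lhd : C →ₗ[k] C →ₗ[k] C
  coassoc : (TensorProduct.assoc k C C C).toLinearMap ∘ₗ
      TensorProduct.map comul LinearMap.id ∘ₗ comul =
    TensorProduct.map LinearMap.id comul ∘ₗ comul
  counit_comul : (TensorProduct.lid k C).toLinearMap ∘ₗ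
      TensorProduct.map counit LinearMap.id ∘ₗ comul = LinearMap.id
  comul_counit : (TensorProduct.rid k C).toLinearMap ∘ₗ
      TensorProduct.map LinearMap.id counit ∘ₗ comul = LinearMap.id
  comul_one : comul one = one ⊗ₜ[k] one
  counit_one : counit one = 1
  lhd_one : ∀ a, lhd a one = a
  one_lhd : ∀ a, lhd one a = counit a • one
  counit_lhd : ∀ a b, counit (lhd a b) = counit a * counit b
  lhd_coalgebra_morphism : comul ∘ₗ TensorProduct.lift lhd =
    TensorProduct.map (TensorProduct.lift lhd) (TensorProduct.lift lhd) ∘ₗ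
      (TensorProduct.tensorTensorTensorComm k C C C C).toLinearMap ∘ₗ
      TensorProduct.map comul comul
  self_distrib : TensorProduct.lift lhd ∘ₗ
      TensorProduct.map (TensorProduct.lift lhd) LinearMap.id =
    TensorProduct.lift lhd ∘ₗ
      TensorProduct.map (TensorProduct.lift lhd) (TensorProduct.lift lhd) ∘ₗ
      (TensorProduct.tensorTensorTensorComm k C C C C).toLinearMap ∘ₗ
      TensorProduct.map LinearMap.id comul

/-- Cocommutativity of the underlying coalgebra of a rack bialgebra. -/
def RackBialgebra.Cocommutative {k C : Type} [Field k] [AddCommGroup C]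
    [Module k C] (R : RackBialgebra k C) : Prop :=
  (TensorProduct.comm k C C).toLinearMap ∘ₗ R.comul = R.comul

open TensorProduct

variable {k C : Type} [Field k] [AddCommGroup C] [Module k C]

/-- `Č = ker ε`, the kernel of the counit of a rack bialgebra. -/
def Cbar (R : RackBialgebra k C) : Submodule k C := LinearMap.ker R.counit

/-- The canonical projection `C → Č`, `x ↦ x − ε(x)·1`. -/
def pbar (R : RackBialgebra k C) : C →ₗ[k] Cbar R :=
  LinearMap.codRestrict (Cbar R)
    (LinearMap.id - LinearMap.toSpanSingleton k C R.one ∘ₗ R.counit)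
    (fun x => by
      simp [Cbar, LinearMap.mem_ker, LinearMap.toSpanSingleton_apply,
        R.counit_one])

/-- The tensor algebra `T = T(Č)` on `Č = ker ε`. -/
abbrev TT (R : RackBialgebra k C) : Type := TensorAlgebra k (Cbar R)

/-- The canonical linear map `i : C → T(Č)`, the identity on `Č` and sending
the coaugmentation `1 ∈ C` to the scalar `1 ∈ T(Č)`. -/
noncomputable def iT (R : RackBialgebra k C) : C →ₗ[k] TT R :=
  TensorAlgebra.ι k ∘ₗ pbar R + Algebra.linearMap k (TT R) ∘ₗ R.counit

/-- The coproduct on `T = T(Č)`: the unique algebra map `T → T ⊗ T` with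
`Δ_T(i(x)) = i(x₁) ⊗ i(x₂)`. -/
noncomputable def comulT (R : RackBialgebra k C) : TT R →ₐ[k] TT R ⊗[k] TT R :=
  TensorAlgebra.lift k
    (TensorProduct.map (iT R) (iT R) ∘ₗ R.comul ∘ₗ (Cbar R).subtype)

/-- The counit on `T = T(Č)`: the unique algebra map `T → k` vanishing
on `Č`. -/
noncomputable def counitT (R : RackBialgebra k C) : TT R →ₐ[k] k :=
  TensorAlgebra.lift k (0 : Cbar R →ₗ[k] k)

/-- The element `i(y₁).i(x ◁ y₂)` of `T(Č)`, as a linear map in `x ⊗ y`. -/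
noncomputable def gen1 (R : RackBialgebra k C) : C ⊗[k] C →ₗ[k] TT R :=
  LinearMap.mul' k (TT R) ∘ₗ
    TensorProduct.map (iT R) (iT R ∘ₗ TensorProduct.lift R.lhd) ∘ₗ
    (TensorProduct.leftComm k C C C).toLinearMap ∘ₗ
    TensorProduct.map LinearMap.id R.comul

/-- The element `i(x).i(y)` of `T(Č)`, as a linear map in `x ⊗ y`. -/
noncomputable def gen2 (R : RackBialgebra k C) : C ⊗[k] C →ₗ[k] TT R :=
  LinearMap.mul' k (TT R) ∘ₗ TensorProduct.map (iT R) (iT R)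

/-- The two-sided ideal `J` of `T(Č)` generated by the elements
`i(y₁).i(x ◁ y₂) − i(x).i(y)` for `x, y ∈ C`, as a `k`-submodule. -/
noncomputable def idealJ (R : RackBialgebra k C) : Submodule k (TT R) :=
  Submodule.span k
    {t | ∃ (a b : TT R) (c : C ⊗[k] C), t = a * (gen1 R c - gen2 R c) * b}

section Helpers

variable {M N P Q : Type} [AddCommGroup M] [Module k M] [AddCommGroup N] [Module k N]
  [AddCommGroup P] [Module k P] [AddCommGroup Q] [Module k Q]

/-- Coproduct on a tensor product. -/
noncomputable def tensD (dM : M →ₗ[k] M ⊗[k] M) (dN : N →ₗ[k] N ⊗[k] N) :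
    M ⊗[k] N →ₗ[k] (M ⊗[k] N) ⊗[k] (M ⊗[k] N) :=
  (TensorProduct.tensorTensorTensorComm k M M N N).toLinearMap ∘ₗ TensorProduct.map dM dN

/-- `f` intertwines the coproducts. -/
def IsCo (dM : M →ₗ[k] M ⊗[k] M) (dN : N →ₗ[k] N ⊗[k] N) (f : M →ₗ[k] N) : Prop :=
  ∀ x, dN (f x) = TensorProduct.map f f (dM x)

theorem IsCo.comp {dM : M →ₗ[k] M ⊗[k] M} {dN : N →ₗ[k] N ⊗[k] N} {dP : P →ₗ[k] P ⊗[k] P}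
    {f : M →ₗ[k] N} {g : N →ₗ[k] P} (hg : IsCo dN dP g) (hf : IsCo dM dN f) :
    IsCo dM dP (g ∘ₗ f) := by
  intro x
  rw [LinearMap.comp_apply, hg, hf, TensorProduct.map_comp, LinearMap.comp_apply]

theorem IsCo.id {dM : M →ₗ[k] M ⊗[k] M} : IsCo dM dM LinearMap.id := by
  intro x
  simp

theorem IsCo.map {dM : M →ₗ[k] M ⊗[k] M} {dN : N →ₗ[k] N ⊗[k] N} {dP : P →ₗ[k] P ⊗[k] P}
    {dQ : Q →ₗ[k] Q ⊗[k] Q}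
    {f : M →ₗ[k] N} {g : P →ₗ[k] Q} (hf : IsCo dM dN f) (hg : IsCo dP dQ g) :
    IsCo (tensD dM dP) (tensD dN dQ) (TensorProduct.map f g) := by
  intro x
  induction x with
  | zero => simp
  | add x y hx hy => simp only [map_add, hx, hy]
  | tmul x y =>
    simp only [tensD, LinearMap.comp_apply, TensorProduct.map_tmul, hf x, hg y]
    generalize dM x = u
    generalize dP y = v
    induction u with
    | zero => simp
    | add a b ha hb => simp only [map_add, TensorProduct.add_tmul, ha, hb]
    | tmul a b =>
      induction v with
      | zero => simp
      | add c d hc hd => simp only [map_add, TensorProduct.tmul_add, hc, hd]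
      | tmul c d => simp

theorem isCo_leftComm (dM : M →ₗ[k] M ⊗[k] M) (dN : N →ₗ[k] N ⊗[k] N) (dP : P →ₗ[k] P ⊗[k] P) :
    IsCo (tensD dM (tensD dN dP)) (tensD dN (tensD dM dP))
      (TensorProduct.leftComm k M N P).toLinearMap := by
  intro x
  induction x with
  | zero => simp
  | add x y hx hy => simp only [map_add, hx, hy]
  | tmul x y =>
    induction y with
    | zero => simp
    | add c d hc hd => simp only [map_add, TensorProduct.tmul_add, hc, hd]
    | tmul y z =>
      simp only [tensD, LinearMap.comp_apply, TensorProduct.map_tmul, LinearEquiv.coe_coe,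
        TensorProduct.leftComm_tmul]
      generalize dM x = u
      generalize dN y = v
      generalize dP z = w
      induction u with
      | zero => simp
      | add a b ha hb => simp only [map_add, TensorProduct.add_tmul, TensorProduct.tmul_add, ha, hb]
      | tmul a b =>
        induction v with
        | zero => simp
        | add c d hc hd =>
          simp only [map_add, TensorProduct.add_tmul, TensorProduct.tmul_add, hc, hd]
        | tmul c d =>
          induction w with
          | zero => simp
          | add c d hc hd =>
            simp only [map_add, TensorProduct.add_tmul, TensorProduct.tmul_add, hc, hd]
          | tmul e f => simp

theorem isCo_mul {A : Type} [Ring A] [Algebra k A] (d : A →ₐ[k] A ⊗[k] A) :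
    IsCo (tensD d.toLinearMap d.toLinearMap) d.toLinearMap (LinearMap.mul' k A) := by
  intro x
  induction x with
  | zero => simp
  | add x y hx hy => simp only [map_add, hx, hy]
  | tmul x y =>
    simp only [tensD, LinearMap.comp_apply, TensorProduct.map_tmul, LinearEquiv.coe_coe,
        LinearMap.mul'_apply, AlgHom.toLinearMap_apply, map_mul]
    generalize d x = u
    generalize d y = v
    induction u with
    | zero => simp
    | add a b ha hb => simp only [map_add, TensorProduct.add_tmul, add_mul, ha, hb]
    | tmul a b =>
      induction v with
      | zero => simp
      | add c d hc hd => simp only [map_add, TensorProduct.tmul_add, mul_add, hc, hd]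
      | tmul c d => simp

/-- The underlying coalgebra. -/
@[reducible] noncomputable def coalgC (R : RackBialgebra k C) : Coalgebra k C where
  comul := R.comul
  counit := R.counit
  coassoc := R.coassoc
  rTensor_counit_comp_comul := by
    ext x
    apply (TensorProduct.lid k C).injective
    have := LinearMap.congr_fun R.counit_comul x
    simpa [LinearMap.rTensor] using this
  lTensor_counit_comp_comul := by
    ext x
    apply (TensorProduct.rid k C).injective
    have := LinearMap.congr_fun R.comul_counit x
    simpa [LinearMap.lTensor] using this

theorem isCo_comul (R : RackBialgebra k C) (h : R.Cocommutative) :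
    IsCo R.comul (tensD R.comul R.comul) R.comul := by
  letI := coalgC R
  haveI : Coalgebra.IsCocomm k C := ⟨h⟩
  intro x
  have := LinearMap.congr_fun (Coalgebra.comulCoalgHom k C).map_comp_comul x
  exact this.symm

theorem isCo_lhd (R : RackBialgebra k C) :
    IsCo (tensD R.comul R.comul) R.comul (TensorProduct.lift R.lhd) :=
  fun x => LinearMap.congr_fun R.lhd_coalgebra_morphism x

theorem pbar_coe (R : RackBialgebra k C) (x : C) :
    (pbar R x : C) = x - R.counit x • R.one := rfl

theorem iT_one (R : RackBialgebra k C) : iT R R.one = 1 := by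
  have : pbar R R.one = 0 := by
    apply Subtype.ext
    simp [pbar_coe, R.counit_one]
  simp [iT, this, R.counit_one]

theorem isCo_iT (R : RackBialgebra k C) :
    IsCo R.comul (comulT R).toLinearMap (iT R) := by
  intro x
  have h1 : comulT R (iT R x) = TensorProduct.map (iT R) (iT R) (R.comul (pbar R x : C))
      + algebraMap k _ (R.counit x) := by
    simp [iT, comulT]
  rw [AlgHom.toLinearMap_apply, h1, pbar_coe, map_sub, map_sub, map_smul, map_smul, R.comul_one,
    TensorProduct.map_tmul, iT_one, Algebra.algebraMap_eq_smul_one,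
    Algebra.TensorProduct.one_def, sub_add_cancel]

theorem isCo_gen1 (R : RackBialgebra k C) (h : R.Cocommutative) :
    IsCo (tensD R.comul R.comul) (comulT R).toLinearMap (gen1 R) :=
  (isCo_mul (comulT R)).comp (((isCo_iT R).map ((isCo_iT R).comp (isCo_lhd R))).comp
    ((isCo_leftComm _ _ _).comp (IsCo.id.map (isCo_comul R h))))

theorem isCo_gen2 (R : RackBialgebra k C) :
    IsCo (tensD R.comul R.comul) (comulT R).toLinearMap (gen2 R) :=
  (isCo_mul (comulT R)).comp ((isCo_iT R).map (isCo_iT R))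

theorem counitT_iT (R : RackBialgebra k C) (x : C) : counitT R (iT R x) = R.counit x := by
  simp [iT, counitT]

theorem counitT_gen (R : RackBialgebra k C) (c : C ⊗[k] C) :
    counitT R (gen1 R c - gen2 R c) = 0 := by
  induction c with
  | zero => simp
  | add a b ha hb =>
    rw [map_add, map_add, add_sub_add_comm, map_add, ha, hb, add_zero]
  | tmul x y =>
    have key : ∀ u : C ⊗[k] C, counitT R (LinearMap.mul' k (TT R)
        (TensorProduct.map (iT R) (iT R ∘ₗ TensorProduct.lift R.lhd)
          (TensorProduct.leftComm k C C C (x ⊗ₜ u)))) =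
        R.counit x * R.counit (TensorProduct.lid k C
          (TensorProduct.map R.counit LinearMap.id u)) := by
      intro u
      induction u with
      | zero => simp
      | add a b ha hb => simp only [map_add, TensorProduct.tmul_add, mul_add, ha, hb]
      | tmul a b =>
        simp [counitT_iT, R.counit_lhd]
        ring
    have h2 : TensorProduct.lid k C
          (TensorProduct.map R.counit LinearMap.id (R.comul y)) = y :=
      LinearMap.congr_fun R.counit_comul y
    have h1 := key (R.comul y)
    rw [h2] at h1
    rw [map_sub]
    have h3 : counitT R (gen1 R (x ⊗ₜ y)) = R.counit x * R.counit y := h1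
    rw [h3]
    simp [gen2, counitT_iT]

/-- The coideal target `T ⊗ J + J ⊗ T`. -/
noncomputable def KK (R : RackBialgebra k C) : Submodule k (TT R ⊗[k] TT R) :=
  LinearMap.range (TensorProduct.map (LinearMap.id (M := TT R)) (idealJ R).subtype) ⊔
  LinearMap.range (TensorProduct.map (idealJ R).subtype (LinearMap.id (M := TT R)))

theorem tmul_mem_right (R : RackBialgebra k C) (a b : TT R) (hb : b ∈ idealJ R) :
    a ⊗ₜ[k] b ∈ KK R :=
  Submodule.mem_sup_left ⟨a ⊗ₜ ⟨b, hb⟩, rfl⟩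

theorem tmul_mem_left (R : RackBialgebra k C) (a b : TT R) (ha : a ∈ idealJ R) :
    a ⊗ₜ[k] b ∈ KK R :=
  Submodule.mem_sup_right ⟨⟨a, ha⟩ ⊗ₜ b, rfl⟩

theorem idealJ_mul (R : RackBialgebra k C) (a b t : TT R) (ht : t ∈ idealJ R) :
    a * t * b ∈ idealJ R := by
  induction ht using Submodule.span_induction with
  | mem x hx =>
    obtain ⟨a2, b2, c, rfl⟩ := hx
    exact Submodule.subset_span ⟨a * a2, b2 * b, c, by simp only [mul_assoc]⟩
  | zero => simp
  | add x y _ _ hx hy => rw [mul_add, add_mul]; exact add_mem hx hy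
  | smul r x _ hx =>
    rw [mul_smul_comm, smul_mul_assoc]; exact Submodule.smul_mem _ r hx

theorem KK_mul (R : RackBialgebra k C) (a b t : TT R ⊗[k] TT R) (ht : t ∈ KK R) :
    a * t * b ∈ KK R := by
  induction a with
  | zero => simp
  | add x y hx hy => rw [add_mul, add_mul]; exact add_mem hx hy
  | tmul a a2 =>
    induction b with
    | zero => simp
    | add x y hx hy => rw [mul_add]; exact add_mem hx hy
    | tmul b b2 =>
      obtain ⟨u, ⟨u, rfl⟩, v, ⟨v, rfl⟩, rfl⟩ := Submodule.mem_sup.1 ht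
      clear ht
      rw [mul_add, add_mul]
      refine add_mem ?_ ?_
      · induction u with
        | zero => simp
        | add x y hx hy => rw [map_add, mul_add, add_mul]; exact add_mem hx hy
        | tmul x y =>
          simp only [TensorProduct.map_tmul, Algebra.TensorProduct.tmul_mul_tmul]
          exact tmul_mem_right R _ _ (idealJ_mul R _ _ _ y.2)
      · induction v with
        | zero => simp
        | add x y hx hy => rw [map_add, mul_add, add_mul]; exact add_mem hx hy
        | tmul x y =>
          simp only [TensorProduct.map_tmul, Algebra.TensorProduct.tmul_mul_tmul]
          exact tmul_mem_left R _ _ (idealJ_mul R _ _ _ x.2)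

theorem gen_mem (R : RackBialgebra k C) (c : C ⊗[k] C) : gen1 R c - gen2 R c ∈ idealJ R :=
  Submodule.subset_span ⟨1, 1, c, by simp⟩

theorem map_gen_mem (R : RackBialgebra k C) (w : (C ⊗[k] C) ⊗[k] (C ⊗[k] C)) :
    TensorProduct.map (gen1 R) (gen1 R) w - TensorProduct.map (gen2 R) (gen2 R) w ∈ KK R := by
  induction w with
  | zero => simp
  | add x y hx hy => rw [map_add, map_add, add_sub_add_comm]; exact add_mem hx hy
  | tmul x y =>
    have : TensorProduct.map (gen1 R) (gen1 R) (x ⊗ₜ y)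
        - TensorProduct.map (gen2 R) (gen2 R) (x ⊗ₜ y)
        = (gen1 R x - gen2 R x) ⊗ₜ[k] gen1 R y + gen2 R x ⊗ₜ[k] (gen1 R y - gen2 R y) := by
      simp only [TensorProduct.map_tmul, TensorProduct.sub_tmul, TensorProduct.tmul_sub]
      abel
    rw [this]
    exact add_mem (tmul_mem_left R _ _ (gen_mem R x)) (tmul_mem_right R _ _ (gen_mem R y))

end Helpers

/-- if `C` is a cocommutative rack bialgebra, then the two-sided
ideal `J = ⟨i(y₁).i(x ◁ y₂) − i(x).i(y)⟩` of `T(Č)` is a coideal: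
`Δ_T(J) ⊆ T ⊗ J + J ⊗ T` and `ε_T(J) = 0`. -/
theorem idealJ_is_coideal (R : RackBialgebra k C) (cocomm : R.Cocommutative) :
    (∀ t ∈ idealJ R, (comulT R).toLinearMap t ∈
      LinearMap.range (TensorProduct.map (LinearMap.id (M := TT R))
        (idealJ R).subtype) ⊔
      LinearMap.range (TensorProduct.map (idealJ R).subtype
        (LinearMap.id (M := TT R)))) ∧
    (∀ t ∈ idealJ R, counitT R t = 0) := by
  refine ⟨fun t ht => ?_, fun t ht => ?_⟩
  · change (comulT R).toLinearMap t ∈ KK R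
    induction ht using Submodule.span_induction with
    | mem x hx =>
      obtain ⟨a, b, c, rfl⟩ := hx
      rw [AlgHom.toLinearMap_apply, map_mul, map_mul]
      apply KK_mul
      have h1 := isCo_gen1 R cocomm c
      have h2 := isCo_gen2 R c
      rw [AlgHom.toLinearMap_apply] at h1 h2
      rw [map_sub, h1, h2]
      exact map_gen_mem R _
    | zero => simp
    | add x y _ _ hx hy => rw [map_add]; exact add_mem hx hy
    | smul r x _ hx => rw [map_smul]; exact Submodule.smul_mem _ r hx
  · induction ht using Submodule.span_induction with
    | mem x hx =>
      obtain ⟨a, b, c, rfl⟩ := hx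
      rw [map_mul, map_mul, counitT_gen, mul_zero, zero_mul]
    | zero => simp
    | add x y _ _ hx hy => rw [map_add, hx, hy, add_zero]
    | smul r x _ hx => rw [map_smul, hx, smul_zero]
end

section
/- Universal property: Let C be a cocommutative rack bialgebra, U(C) its universal enveloping algebra with canonical map q : C → U(C). If q_H : C → H is any Yetter-Drinfel'd rack structure on C over a bialgebra H, then there exists a unique morphism of bialgebras u : U(C) → H with u ∘ q = q_H, and consequently x ·_{U(C)} s = x ·_H u(s) for all x ∈ C, s ∈ U(C). -/
open TensorProduct

set_option maxHeartbeats 1000000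

open TensorProduct

variable {k C : Type} [Field k] [AddCommGroup C] [Module k C]

/-- The relation on `T(Č)` identifying `i(y₁).i(x ◁ y₂)` with `i(x).i(y)`. -/
noncomputable def relU (R : RackBialgebra k C) : TT R → TT R → Prop :=
  fun s t => ∃ c : C ⊗[k] C, s = gen1 R c ∧ t = gen2 R c

/-- The universal enveloping algebra `U(C) = T(Č)/J`. -/
abbrev UC (R : RackBialgebra k C) : Type := RingQuot (relU R)

/-- The canonical map `q : C → U(C)`. -/
noncomputable def qU (R : RackBialgebra k C) : C →ₗ[k] UC R :=
  (RingQuot.mkAlgHom k (relU R)).toLinearMap ∘ₗ iT R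


/-- universal property of `U(C)`: let `C` be a cocommutative
rack bialgebra and `U(C)` its universal enveloping algebra with canonical map
`q : C → U(C)` and induced bialgebra structure.  If `q_H : C → H` is any
Yetter-Drinfel'd rack structure on `C` over a bialgebra `H`, then there is a
unique bialgebra morphism `u : U(C) → H` with `u ∘ q = q_H`, and consequently
`x ·_{U(C)} s = x ·_H u(s)` for all `x ∈ C`, `s ∈ U(C)`. -/
theorem UC_universal_property (R : RackBialgebra k C) (cocomm : R.Cocommutative)
    -- the induced bialgebra structure on `U(C)`
    (comulU : UC R →ₐ[k] UC R ⊗[k] UC R) (counitU : UC R →ₐ[k] k)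
    (hcomulU : comulU.toLinearMap ∘ₗ (RingQuot.mkAlgHom k (relU R)).toLinearMap =
      TensorProduct.map (RingQuot.mkAlgHom k (relU R)).toLinearMap
          (RingQuot.mkAlgHom k (relU R)).toLinearMap ∘ₗ
        (comulT R).toLinearMap)
    (hcounitU : counitU.toLinearMap ∘ₗ
        (RingQuot.mkAlgHom k (relU R)).toLinearMap = (counitT R).toLinearMap)
    -- the canonical right `U(C)`-module structure on `C`
    (actU : C →ₗ[k] UC R →ₗ[k] C)
    (actU_one : ∀ x : C, actU x (1 : UC R) = x)
    (actU_mul : ∀ (x : C) (g h : UC R), actU (actU x g) h = actU x (g * h))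
    (actU_q : ∀ x y : C, actU x (qU R y) = R.lhd x y)
    -- a Yetter-Drinfel'd rack structure on `C` over a bialgebra `H`
    (H : Type) [Ring H] [Bialgebra k H]
    (actH : C →ₗ[k] H →ₗ[k] C)
    (actH_one : ∀ x : C, actH x (1 : H) = x)
    (actH_mul : ∀ (x : C) (g h : H), actH (actH x g) h = actH x (g * h))
    (modcoalg : R.comul ∘ₗ TensorProduct.lift actH =
      TensorProduct.map (TensorProduct.lift actH) (TensorProduct.lift actH) ∘ₗ
        (TensorProduct.tensorTensorTensorComm k C C H H).toLinearMap ∘ₗ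
        TensorProduct.map R.comul (Coalgebra.comul (R := k) (A := H)))
    (modcounit : ∀ (x : C) (h : H),
      R.counit (actH x h) = R.counit x * Coalgebra.counit (R := k) h)
    (qH : C →ₗ[k] H)
    (qH_comul : (Coalgebra.comul (R := k) (A := H)) ∘ₗ qH =
      TensorProduct.map qH qH ∘ₗ R.comul)
    (qH_counit : (Coalgebra.counit (R := k) (A := H)) ∘ₗ qH = R.counit)
    (qH_one : qH R.one = 1)
    (cond_c : ∀ a b : C, R.lhd a b = actH a (qH b))
    (cond_d : LinearMap.mul' k H ∘ₗ
        TensorProduct.map LinearMap.id (qH ∘ₗ TensorProduct.lift actH) ∘ₗ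
        (TensorProduct.leftComm k C H H).toLinearMap ∘ₗ
        TensorProduct.map LinearMap.id (Coalgebra.comul (R := k) (A := H)) =
      LinearMap.mul' k H ∘ₗ TensorProduct.map qH LinearMap.id) :
    ∃! u : UC R →ₐ[k] H,
      -- `u` is a morphism of bialgebras
      ((Coalgebra.comul (R := k) (A := H)) ∘ₗ u.toLinearMap =
        TensorProduct.map u.toLinearMap u.toLinearMap ∘ₗ comulU.toLinearMap) ∧
      ((Coalgebra.counit (R := k) (A := H)) ∘ₗ u.toLinearMap =
        counitU.toLinearMap) ∧
      -- `u ∘ q = q_H`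
      (u.toLinearMap ∘ₗ qU R = qH) ∧
      -- the equivariance property `x ·_{U(C)} s = x ·_H u(s)`
      (∀ (x : C) (s : UC R), actU x s = actH x (u s)) := by
  have hcounit_add : ∀ x : C, ((pbar R x : Cbar R) : C) = x - R.counit x • R.one := by
    intro x
    rfl
  have hiT : ∀ x : Cbar R, iT R (x : C) = TensorAlgebra.ι k x := by
    intro x
    have hx : R.counit (x : C) = 0 := x.2
    have hp : pbar R (x : C) = x := by
      apply Subtype.ext
      rw [hcounit_add, hx]; simp
    simp [iT, hx, hp]
  let u0 : TT R →ₐ[k] H := TensorAlgebra.lift k (qH ∘ₗ (Cbar R).subtype)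
  have hu0ι : ∀ x : Cbar R, u0 (TensorAlgebra.ι k x) = qH (x : C) := by
    intro x
    simp [u0]
  have hu0 : ∀ x : C, u0 (iT R x) = qH x := by
    intro x
    have : iT R x = TensorAlgebra.ι k (pbar R x) + algebraMap k (TT R) (R.counit x) := by
      simp [iT]
    rw [this, map_add, hu0ι, hcounit_add, AlgHom.commutes, map_sub, map_smul, qH_one,
      Algebra.algebraMap_eq_smul_one, sub_add_cancel]
  have key : ∀ c : C ⊗[k] C, u0 (gen1 R c) = u0 (gen2 R c) := by
    have aux : ∀ (x : C) (w : C ⊗[k] C),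
        u0 (LinearMap.mul' k (TT R)
          (TensorProduct.map (iT R) (iT R ∘ₗ TensorProduct.lift R.lhd)
            (TensorProduct.leftComm k C C C (x ⊗ₜ[k] w)))) =
        LinearMap.mul' k H
          (TensorProduct.map LinearMap.id (qH ∘ₗ TensorProduct.lift actH)
            (TensorProduct.leftComm k C H H (x ⊗ₜ[k] TensorProduct.map qH qH w))) := by
      intro x w
      induction w using TensorProduct.induction_on with
      | zero => simp
      | tmul a b => simp [hu0, cond_c]
      | add a b ha hb => simp only [TensorProduct.tmul_add, map_add, ha, hb]
    intro c
    induction c using TensorProduct.induction_on with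
    | zero => simp
    | add a b ha hb => simp only [map_add, ha, hb]
    | tmul x y =>
      have h1 := aux x (R.comul y)
      have h2 := LinearMap.congr_fun cond_d (x ⊗ₜ[k] qH y)
      have h3 := LinearMap.congr_fun qH_comul y
      simp only [LinearMap.comp_apply] at h3
      simp only [LinearMap.comp_apply, TensorProduct.map_tmul, LinearMap.id_apply, h3,
        LinearEquiv.coe_coe, LinearMap.mul'_apply] at h2
      simp only [gen1, gen2, LinearMap.comp_apply, TensorProduct.map_tmul, LinearMap.id_apply,
        LinearEquiv.coe_coe, LinearMap.mul'_apply, map_mul, hu0] at h1 ⊢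
      rw [h1]
      exact h2
  let u : UC R →ₐ[k] H := RingQuot.liftAlgHom k ⟨u0, by
    rintro s t ⟨c, rfl, rfl⟩
    exact key c⟩
  have hu : ∀ t : TT R, u (RingQuot.mkAlgHom k (relU R) t) = u0 t := by
    intro t
    simp [u]
  have hsurj := RingQuot.mkAlgHom_surjective k (relU R)
  have huq : ∀ x : C, u (qU R x) = qH x := by
    intro x
    simp only [qU, LinearMap.comp_apply, AlgHom.toLinearMap_apply, hu, hu0]
  have hmkι : ∀ x : Cbar R, RingQuot.mkAlgHom k (relU R) (TensorAlgebra.ι k x) = qU R (x : C) := by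
    intro x
    simp only [qU, LinearMap.comp_apply, AlgHom.toLinearMap_apply, hiT]
  refine ⟨u, ⟨?_, ?_, ?_, ?_⟩, ?_⟩
  · have : (Bialgebra.comulAlgHom k H).comp u = (Algebra.TensorProduct.map u u).comp comulU := by
      apply RingQuot.ringQuot_ext'
      apply TensorAlgebra.hom_ext
      ext x
      have h1 := LinearMap.congr_fun hcomulU (TensorAlgebra.ι k x)
      have h3 := LinearMap.congr_fun qH_comul (x : C)
      simp only [LinearMap.comp_apply, AlgHom.toLinearMap_apply] at h1 h3
      have h4 : comulT R (TensorAlgebra.ι k x) =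
          TensorProduct.map (iT R) (iT R) (R.comul (x : C)) := by
        simp [comulT]
      have aux : ∀ w : C ⊗[k] C, Algebra.TensorProduct.map u u
          (TensorProduct.map (RingQuot.mkAlgHom k (relU R)).toLinearMap
            (RingQuot.mkAlgHom k (relU R)).toLinearMap
            (TensorProduct.map (iT R) (iT R) w)) = TensorProduct.map qH qH w := by
        intro w
        induction w using TensorProduct.induction_on with
        | zero => simp
        | tmul a b => simp [hu, hu0]
        | add a b ha hb => simp only [map_add, ha, hb]
      simp only [LinearMap.comp_apply, AlgHom.toLinearMap_apply, AlgHom.comp_apply, hu, hu0ι,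
        Bialgebra.comulAlgHom_apply, h1, h3, h4, aux]
    ext1 s
    exact DFunLike.congr_fun this s
  · have : (Bialgebra.counitAlgHom k H).comp u = counitU := by
      apply RingQuot.ringQuot_ext'
      apply TensorAlgebra.hom_ext
      ext x
      have h1 := LinearMap.congr_fun hcounitU (TensorAlgebra.ι k x)
      have h3 := LinearMap.congr_fun qH_counit (x : C)
      have hx : R.counit (x : C) = 0 := x.2
      simp only [LinearMap.comp_apply, AlgHom.toLinearMap_apply] at h1 h3
      have h4 : counitT R (TensorAlgebra.ι k x) = 0 := by
        simp [counitT]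
      simp only [LinearMap.comp_apply, AlgHom.toLinearMap_apply, AlgHom.comp_apply, hu, hu0ι,
        Bialgebra.counitAlgHom_apply, h1, h3, h4, hx]
    ext1 s
    exact DFunLike.congr_fun this s
  · ext x
    exact huq x
  · intro x s
    obtain ⟨t, rfl⟩ := hsurj s
    induction t using TensorAlgebra.induction generalizing x with
    | algebraMap r =>
      simp only [AlgHom.commutes, Algebra.algebraMap_eq_smul_one, map_smul, map_one,
        actU_one, actH_one]
    | ι y => rw [hmkι, actU_q, huq, cond_c]
    | mul a b ha hb =>
      rw [map_mul (RingQuot.mkAlgHom k (relU R)), map_mul u, ← actU_mul, ← actH_mul, ha, hb]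
    | add a b ha hb => simp only [map_add, ha, hb]
  · rintro v ⟨-, -, hv, -⟩
    apply RingQuot.ringQuot_ext'
    apply TensorAlgebra.hom_ext
    ext x
    have := LinearMap.congr_fun hv (x : C)
    simp only [LinearMap.comp_apply, AlgHom.toLinearMap_apply, AlgHom.comp_apply] at this ⊢
    rw [hmkι, this, huq]
end

section
/- For the cocommutative rack bialgebra C = k·1 ⊕ k·g with Δ(g) = g ⊗ g, ε(g) = 1, and g ◁ g = g, the universal enveloping algebra U(C) is isomorphic as a bialgebra to the polynomial algebra k[X] with X group-like, and this bialgebra admits no antipode (it is not a Hopf algebra). -/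
open TensorProduct

set_option maxHeartbeats 1000000

open TensorProduct

variable {k C : Type} [Field k] [AddCommGroup C] [Module k C]

/-- The coproduct of the rack bialgebra `C = k·1 ⊕ k·g` in which both `1=(1,0)`
and `g=(0,1)` are group-like. -/
noncomputable def comulGG : (k × k) →ₗ[k] (k × k) ⊗[k] (k × k) :=
  LinearMap.toSpanSingleton k ((k × k) ⊗[k] (k × k))
      (((1 : k), (0 : k)) ⊗ₜ[k] ((1 : k), (0 : k))) ∘ₗ LinearMap.fst k k k +
  LinearMap.toSpanSingleton k ((k × k) ⊗[k] (k × k))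
      (((0 : k), (1 : k)) ⊗ₜ[k] ((0 : k), (1 : k))) ∘ₗ LinearMap.snd k k k

/-- The counit of the rack bialgebra `C = k·1 ⊕ k·g`. -/
def counitGG : (k × k) →ₗ[k] k := LinearMap.fst k k k + LinearMap.snd k k k

/-- The rack product with `g ◁ g = g` (conjugation rack of the trivial group):
`(a·1 + x·g) ◁ (b·1 + y·g) = (b + y) • (a·1 + x·g)`. -/
def lhdGGg : (k × k) →ₗ[k] (k × k) →ₗ[k] (k × k) :=
  LinearMap.mk₂ k (fun c d => (d.1 + d.2) • c)
    (fun m₁ m₂ n => by simp [smul_add])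
    (fun a m n => by simp [smul_comm a])
    (fun m n₁ n₂ => by
      simp [Prod.fst_add, Prod.snd_add, add_smul]; module)
    (fun a m n => by
      simp [Prod.smul_fst, Prod.smul_snd, smul_eq_mul, mul_smul]; module)

noncomputable def phiT (R : RackBialgebra k (k × k)) : TT R →ₐ[k] Polynomial k :=
  TensorAlgebra.lift k
    (LinearMap.toSpanSingleton k (Polynomial k) (Polynomial.X - 1) ∘ₗ
      LinearMap.snd k k k ∘ₗ (Cbar R).subtype)

noncomputable def psiT (R : RackBialgebra k (k × k)) : Polynomial k →ₐ[k] TT R :=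
  Polynomial.aeval (iT R ((0 : k), (1 : k)))

theorem iT_one_eq (R : RackBialgebra k (k × k)) : iT R R.one = 1 := by
  have : pbar R R.one = 0 := by
    apply Subtype.ext
    change R.one - R.counit R.one • R.one = 0
    simp [R.counit_one]
  simp [iT, this, R.counit_one]

theorem iT_Cbar (R : RackBialgebra k (k × k)) (v : Cbar R) :
    iT R v = TensorAlgebra.ι k v := by
  have hv : R.counit v = 0 := v.2
  have : pbar R v = v := by
    apply Subtype.ext
    change (v : k × k) - R.counit v • R.one = v
    simp [hv]
  simp [iT, this, hv]

theorem Cbar_eq (R : RackBialgebra k (k × k)) (he : R.counit = counitGG (k := k))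
    (h1 : R.one = ((1 : k), (0 : k))) (v : Cbar R) :
    (v : k × k) = (v : k × k).2 • (((0 : k), (1 : k)) - R.one) := by
  have hv : R.counit v = 0 := v.2
  rw [he] at hv
  simp only [counitGG, LinearMap.add_apply, LinearMap.fst_apply, LinearMap.snd_apply] at hv
  rw [h1]
  ext
  · simp; linear_combination hv
  · simp

theorem phiT_iT_g (R : RackBialgebra k (k × k)) (he : R.counit = counitGG (k := k))
    (h1 : R.one = ((1 : k), (0 : k))) :
    phiT R (iT R ((0 : k), (1 : k))) = Polynomial.X := by
  simp [iT, phiT, pbar, he, h1, counitGG]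

theorem psi_phi (R : RackBialgebra k (k × k)) (he : R.counit = counitGG (k := k))
    (h1 : R.one = ((1 : k), (0 : k))) (t : TT R) : psiT R (phiT R t) = t := by
  have : (psiT R).comp (phiT R) = AlgHom.id k (TT R) := by
    apply TensorAlgebra.hom_ext
    ext v
    have h2 := congrArg (iT R) (Cbar_eq R he h1 v)
    rw [iT_Cbar, map_smul, map_sub, iT_one_eq] at h2
    simp [phiT_iT_g R he h1, h2, psiT]
  exact DFunLike.congr_fun this t

theorem TT_comm (R : RackBialgebra k (k × k)) (he : R.counit = counitGG (k := k))
    (h1 : R.one = ((1 : k), (0 : k))) (s t : TT R) : s * t = t * s := by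
  rw [← psi_phi R he h1 s, ← psi_phi R he h1 t, ← map_mul, mul_comm, map_mul]

theorem relU_eq (R : RackBialgebra k (k × k))
    (hc : R.comul = comulGG (k := k)) (he : R.counit = counitGG (k := k))
    (h1 : R.one = ((1 : k), (0 : k))) (hl : R.lhd = lhdGGg (k := k))
    (s t : TT R) (h : relU R s t) : s = t := by
  obtain ⟨c, rfl, rfl⟩ := h
  induction c with
  | zero => simp
  | add a b ha hb => rw [map_add, map_add, ha, hb]
  | tmul x y =>
    obtain ⟨a, b⟩ := y
    have hy : ((a, b) : k × k) = a • ((1 : k), (0 : k)) + b • ((0 : k), (1 : k)) := by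
      ext <;> simp
    have h2 : gen2 R (x ⊗ₜ (a, b)) = iT R (a, b) * iT R x := by
      rw [TT_comm R he h1]; simp [gen2]
    rw [h2, hy, map_add, map_smul, map_smul]
    simp [gen1, hc, hl, comulGG, lhdGGg, TensorProduct.tmul_add, add_mul]

/-- for the cocommutative rack bialgebra `C = k·1 ⊕ k·g` with
`g` group-like and `g ◁ g = g`, the universal enveloping algebra `U(C)` is
isomorphic as a bialgebra to the polynomial bialgebra `k[X]` with `X`
group-like, and this bialgebra admits no antipode. -/
theorem UC_trivial_rack_polynomial_no_antipode
    (R : RackBialgebra k (k × k))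
    (hc : R.comul = comulGG (k := k)) (he : R.counit = counitGG (k := k))
    (h1 : R.one = ((1 : k), (0 : k))) (hl : R.lhd = lhdGGg (k := k)) :
    -- the induced bialgebra structure on `U(C)`
    ∃ (comulU : UC R →ₐ[k] UC R ⊗[k] UC R) (counitU : UC R →ₐ[k] k),
      (comulU.toLinearMap ∘ₗ (RingQuot.mkAlgHom k (relU R)).toLinearMap =
        TensorProduct.map (RingQuot.mkAlgHom k (relU R)).toLinearMap
            (RingQuot.mkAlgHom k (relU R)).toLinearMap ∘ₗ
          (comulT R).toLinearMap) ∧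
      (counitU.toLinearMap ∘ₗ (RingQuot.mkAlgHom k (relU R)).toLinearMap =
        (counitT R).toLinearMap) ∧
      -- the polynomial bialgebra `k[X]` with `X` group-like
      ∃ (dP : Polynomial k →ₐ[k] Polynomial k ⊗[k] Polynomial k)
        (eP : Polynomial k →ₐ[k] k),
        dP Polynomial.X = Polynomial.X ⊗ₜ[k] Polynomial.X ∧
        eP Polynomial.X = 1 ∧
        -- `U(C) ≅ k[X]` as bialgebras, `q(g) ↦ X`
        (∃ e : UC R ≃ₐ[k] Polynomial k,
          e (qU R ((0 : k), (1 : k))) = Polynomial.X ∧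
          TensorProduct.map e.toLinearMap e.toLinearMap ∘ₗ
              comulU.toLinearMap = dP.toLinearMap ∘ₗ e.toLinearMap ∧
          eP.toLinearMap ∘ₗ e.toLinearMap = counitU.toLinearMap) ∧
        -- `k[X]` with `X` group-like has no antipode
        ¬ ∃ S : Polynomial k →ₗ[k] Polynomial k,
            LinearMap.mul' k (Polynomial k) ∘ₗ
              TensorProduct.map S LinearMap.id ∘ₗ dP.toLinearMap =
                Algebra.linearMap k (Polynomial k) ∘ₗ eP.toLinearMap ∧
            LinearMap.mul' k (Polynomial k) ∘ₗ
              TensorProduct.map LinearMap.id S ∘ₗ dP.toLinearMap =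
                Algebra.linearMap k (Polynomial k) ∘ₗ eP.toLinearMap := by
  have hrel := relU_eq R hc he h1 hl
  let mk := RingQuot.mkAlgHom k (relU R)
  let cU : UC R →ₐ[k] UC R ⊗[k] UC R := RingQuot.liftAlgHom k
    ⟨(Algebra.TensorProduct.map mk mk).comp (comulT R),
      fun _ _ h => by rw [hrel _ _ h]⟩
  let eU : UC R →ₐ[k] k := RingQuot.liftAlgHom k
    ⟨counitT R, fun _ _ h => by rw [hrel _ _ h]⟩
  let f : UC R →ₐ[k] Polynomial k := RingQuot.liftAlgHom k
    ⟨phiT R, fun _ _ h => by rw [hrel _ _ h]⟩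
  have hcU : ∀ t, cU (mk t) = Algebra.TensorProduct.map mk mk (comulT R t) :=
    fun t => RingQuot.liftAlgHom_mkAlgHom_apply _ _ _ _
  have heU : ∀ t, eU (mk t) = counitT R t :=
    fun t => RingQuot.liftAlgHom_mkAlgHom_apply _ _ _ _
  have hf : ∀ t, f (mk t) = phiT R t :=
    fun t => RingQuot.liftAlgHom_mkAlgHom_apply _ _ _ _
  have hsurj : Function.Surjective mk := RingQuot.mkAlgHom_surjective k (relU R)
  have hfX : f (mk (iT R ((0 : k), (1 : k)))) = Polynomial.X := by
    rw [hf, phiT_iT_g R he h1]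
  let e : UC R ≃ₐ[k] Polynomial k := AlgEquiv.ofAlgHom f (mk.comp (psiT R))
    (by
      apply Polynomial.algHom_ext
      simpa [psiT] using hfX)
    (by
      apply AlgHom.ext; intro u
      obtain ⟨t, rfl⟩ := hsurj u
      simp [hf, psi_phi R he h1])
  let dP : Polynomial k →ₐ[k] Polynomial k ⊗[k] Polynomial k :=
    Polynomial.aeval (Polynomial.X ⊗ₜ[k] Polynomial.X)
  let eP : Polynomial k →ₐ[k] k := Polynomial.aeval (1 : k)
  have hgen : ∀ {A : Type} [Semiring A] [Algebra k A] (p q : UC R →ₐ[k] A),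
      p (mk (iT R ((0 : k), (1 : k)))) = q (mk (iT R ((0 : k), (1 : k)))) → p = q := by
    intro A _ _ p q hpq
    have : (p.comp mk).comp (psiT R) = (q.comp mk).comp (psiT R) := by
      apply Polynomial.algHom_ext
      simpa [psiT] using hpq
    apply AlgHom.ext; intro u
    obtain ⟨t, rfl⟩ := hsurj u
    have h3 := DFunLike.congr_fun this (phiT R t)
    simpa [psi_phi R he h1] using h3
  -- the coproduct and counit of `T` on `i(g)`
  have hone : iT R ((1 : k), (0 : k)) = 1 := by rw [← h1, iT_one_eq]
  have hsplit : iT R ((0 : k), (1 : k)) =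
      TensorAlgebra.ι k (pbar R ((0 : k), (1 : k))) + 1 := by
    simp [iT, he, counitGG]
  have hdT : comulT R (iT R ((0 : k), (1 : k))) =
      iT R ((0 : k), (1 : k)) ⊗ₜ[k] iT R ((0 : k), (1 : k)) := by
    conv_lhs => rw [hsplit]
    simp [comulT, pbar, hc, he, h1, comulGG, counitGG, hone,
      Algebra.TensorProduct.one_def]
  have heT : counitT R (iT R ((0 : k), (1 : k))) = 1 := by
    rw [hsplit]
    simp [counitT]
  refine ⟨cU, eU, ?_, ?_, dP, eP, ?_, ?_, ⟨e, ?_, ?_, ?_⟩, ?_⟩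
  · ext1 t
    exact hcU t
  · ext1 t
    exact heU t
  · simp [dP]
  · simp [eP]
  · exact hfX
  · have : (Algebra.TensorProduct.map f f).comp cU = dP.comp f := by
      apply hgen
      simp only [AlgHom.comp_apply]
      rw [hcU, hdT, hfX]
      simp [dP, hfX]
    ext1 u
    exact DFunLike.congr_fun this u
  · have : eP.comp f = eU := by
      apply hgen
      simp only [AlgHom.comp_apply]
      rw [heU, heT, hfX]
      simp [eP]
    ext1 u
    exact DFunLike.congr_fun this u
  · rintro ⟨S, hS, -⟩
    have h3 := LinearMap.congr_fun hS Polynomial.X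
    simp [dP, eP] at h3
    exact Polynomial.not_isUnit_X (IsUnit.of_mul_eq_one_right _ h3)
end

section
/- For the rack bialgebra C = k·1 ⊕ k·g with group-like g and g ◁ g = 1, the universal enveloping algebra U(C) is the bialgebra generated by one group-like element g subject to g² = g, and U(C) ≅ k ⊕ k as a k-algebra. -/
open TensorProduct

set_option maxHeartbeats 1000000

open TensorProduct

variable {k C : Type} [Field k] [AddCommGroup C] [Module k C]

/-- The rack product with `g ◁ g = 1`:
`(a·1 + x·g) ◁ (b·1 + y·g) = (ab + ay + xy)·1 + xb·g`. -/
def lhdGG1 : (k × k) →ₗ[k] (k × k) →ₗ[k] (k × k) :=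
  LinearMap.mk₂ k (fun c d => (c.1 * d.1 + c.1 * d.2 + c.2 * d.2, c.2 * d.1))
    (fun m₁ m₂ n => by apply Prod.ext <;> simp <;> ring)
    (fun a m n => by
      apply Prod.ext <;> simp [Prod.smul_fst, Prod.smul_snd, smul_eq_mul] <;>
        ring)
    (fun m n₁ n₂ => by apply Prod.ext <;> simp <;> ring)
    (fun a m n => by
      apply Prod.ext <;> simp [Prod.smul_fst, Prod.smul_snd, smul_eq_mul] <;>
        ring)

section Helpers

variable (R : RackBialgebra k (k × k))

theorem aux_iT_e (he : R.counit = counitGG (k := k))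
    (h1 : R.one = ((1 : k), (0 : k))) : iT R ((1 : k), (0 : k)) = 1 := by
  have hp : pbar R ((1 : k), (0 : k)) = 0 := by
    apply Subtype.ext
    simp [pbar, he, h1, counitGG]
  simp [iT, hp, he, counitGG]

/-- The generator of `ker ε`. -/
theorem aux_cbar (he : R.counit = counitGG (k := k))
    (h1 : R.one = ((1 : k), (0 : k))) (x : Cbar R) :
    x = x.1.2 • pbar R ((0 : k), (1 : k)) := by
  have hx : x.1.1 + x.1.2 = 0 := by
    have := x.2
    simpa [Cbar, he, counitGG] using this
  apply Subtype.ext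
  apply Prod.ext
  · simp [pbar, he, h1, counitGG]
    linear_combination hx
  · simp [pbar, he, h1, counitGG]

theorem aux_iT_g (he : R.counit = counitGG (k := k)) :
    iT R ((0 : k), (1 : k)) = TensorAlgebra.ι k (pbar R ((0 : k), (1 : k))) + 1 := by
  simp [iT, he, counitGG]

theorem aux_TT_ext {A : Type} [Ring A] [Algebra k A]
    (he : R.counit = counitGG (k := k)) (h1 : R.one = ((1 : k), (0 : k)))
    (f f' : TT R →ₐ[k] A) (h : f (iT R ((0 : k), (1 : k))) = f' (iT R ((0 : k), (1 : k)))) :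
    f = f' := by
  apply TensorAlgebra.hom_ext
  apply LinearMap.ext
  intro x
  rw [aux_cbar R he h1 x]
  rw [aux_iT_g R he] at h
  simp only [map_add, map_one, add_left_inj] at h
  simp [h]

theorem aux_UC_ext {A : Type} [Ring A] [Algebra k A]
    (he : R.counit = counitGG (k := k)) (h1 : R.one = ((1 : k), (0 : k)))
    (f f' : UC R →ₐ[k] A) (h : f (qU R ((0 : k), (1 : k))) = f' (qU R ((0 : k), (1 : k)))) :
    f = f' := by
  apply RingQuot.ringQuot_ext'
  apply aux_TT_ext R he h1
  simpa [qU] using h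

theorem aux_rel {A : Type} [Ring A] [Algebra k A]
    (hc : R.comul = comulGG (k := k)) (he : R.counit = counitGG (k := k))
    (h1 : R.one = ((1 : k), (0 : k))) (hl : R.lhd = lhdGG1 (k := k))
    (f : TT R →ₐ[k] A)
    (h : f (iT R ((0 : k), (1 : k))) * f (iT R ((0 : k), (1 : k))) =
      f (iT R ((0 : k), (1 : k)))) (c : (k × k) ⊗[k] (k × k)) :
    f (gen1 R c) = f (gen2 R c) := by
  have key : f.toLinearMap ∘ₗ gen1 R = f.toLinearMap ∘ₗ gen2 R := by
    ext <;> simp [gen1, gen2, hc, comulGG, hl, lhdGG1, aux_iT_e R he h1, h]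
  exact LinearMap.congr_fun key c

theorem aux_exists {A : Type} [Ring A] [Algebra k A]
    (hc : R.comul = comulGG (k := k)) (he : R.counit = counitGG (k := k))
    (h1 : R.one = ((1 : k), (0 : k))) (hl : R.lhd = lhdGG1 (k := k))
    (a : A) (ha : a * a = a) :
    ∃ f : UC R →ₐ[k] A, f (qU R ((0 : k), (1 : k))) = a := by
  let φ : TT R →ₐ[k] A := TensorAlgebra.lift k
    (LinearMap.toSpanSingleton k A (a - 1) ∘ₗ LinearMap.snd k k k ∘ₗ (Cbar R).subtype)
  have hφ : φ (iT R ((0 : k), (1 : k))) = a := by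
    rw [aux_iT_g R he]
    simp [φ, pbar, he, h1, counitGG]
  refine ⟨RingQuot.liftAlgHom k ⟨φ, ?_⟩, ?_⟩
  · rintro x y ⟨c, rfl, rfl⟩
    exact aux_rel R hc he h1 hl φ (by rw [hφ, ha]) c
  · simp [qU, hφ]

theorem aux_idem
    (hc : R.comul = comulGG (k := k)) (he : R.counit = counitGG (k := k))
    (h1 : R.one = ((1 : k), (0 : k))) (hl : R.lhd = lhdGG1 (k := k)) :
    qU R ((0 : k), (1 : k)) * qU R ((0 : k), (1 : k)) = qU R ((0 : k), (1 : k)) := by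
  have h := RingQuot.mkAlgHom_rel k (s := relU R)
    ⟨((0 : k), (1 : k)) ⊗ₜ[k] ((0 : k), (1 : k)), rfl, rfl⟩
  have e1 : gen1 R (((0 : k), (1 : k)) ⊗ₜ[k] ((0 : k), (1 : k))) = iT R ((0 : k), (1 : k)) := by
    simp [gen1, hc, comulGG, hl, lhdGG1, aux_iT_e R he h1]
  rw [e1] at h
  simpa [gen2, qU] using h.symm

theorem aux_comulT
    (hc : R.comul = comulGG (k := k)) (he : R.counit = counitGG (k := k))
    (h1 : R.one = ((1 : k), (0 : k))) :
    comulT R (iT R ((0 : k), (1 : k))) =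
      iT R ((0 : k), (1 : k)) ⊗ₜ[k] iT R ((0 : k), (1 : k)) := by
  conv_lhs => rw [aux_iT_g R he]
  simp [comulT, pbar, he, h1, counitGG, hc, comulGG, aux_iT_e R he h1,
    Algebra.TensorProduct.one_def]

end Helpers

/-- for the rack bialgebra `C = k·1 ⊕ k·g` with `g` group-like
and `g ◁ g = 1`, the universal enveloping algebra `U(C)` is the bialgebra
generated by one group-like element `q(g)` subject to `q(g)² = q(g)`, and
`U(C) ≅ k ⊕ k` as a `k`-algebra. -/
theorem UC_involutory_rack_idempotent
    (R : RackBialgebra k (k × k))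
    (hc : R.comul = comulGG (k := k)) (he : R.counit = counitGG (k := k))
    (h1 : R.one = ((1 : k), (0 : k))) (hl : R.lhd = lhdGG1 (k := k)) :
    ∃ (comulU : UC R →ₐ[k] UC R ⊗[k] UC R) (counitU : UC R →ₐ[k] k),
      -- the induced bialgebra structure on `U(C)`
      (comulU.toLinearMap ∘ₗ (RingQuot.mkAlgHom k (relU R)).toLinearMap =
        TensorProduct.map (RingQuot.mkAlgHom k (relU R)).toLinearMap
            (RingQuot.mkAlgHom k (relU R)).toLinearMap ∘ₗ
          (comulT R).toLinearMap) ∧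
      (counitU.toLinearMap ∘ₗ (RingQuot.mkAlgHom k (relU R)).toLinearMap =
        (counitT R).toLinearMap) ∧
      -- the generator `q(g)` is group-like and idempotent, and generates
      (comulU (qU R ((0 : k), (1 : k))) =
        qU R ((0 : k), (1 : k)) ⊗ₜ[k] qU R ((0 : k), (1 : k))) ∧
      (qU R ((0 : k), (1 : k)) * qU R ((0 : k), (1 : k)) =
        qU R ((0 : k), (1 : k))) ∧
      (Algebra.adjoin k {qU R ((0 : k), (1 : k))} = ⊤) ∧
      -- `U(C) ≅ k ⊕ k` as a `k`-algebra
      Nonempty (UC R ≃ₐ[k] (k × k)) := by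
  have hi := aux_idem R hc he h1 hl
  obtain ⟨D, hD⟩ := aux_exists R hc he h1 hl
    (qU R ((0 : k), (1 : k)) ⊗ₜ[k] qU R ((0 : k), (1 : k)))
    (by rw [Algebra.TensorProduct.tmul_mul_tmul, hi])
  obtain ⟨E, hE⟩ := aux_exists R hc he h1 hl (1 : k) (by simp)
  refine ⟨D, E, ?_, ?_, hD, hi, ?_, ?_⟩
  · have := aux_TT_ext (A := UC R ⊗[k] UC R) R he h1 (D.comp (RingQuot.mkAlgHom k (relU R)))
      ((Algebra.TensorProduct.map (RingQuot.mkAlgHom k (relU R))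
        (RingQuot.mkAlgHom k (relU R))).comp (comulT R)) (by
          rw [AlgHom.comp_apply, AlgHom.comp_apply, aux_comulT R hc he h1,
            Algebra.TensorProduct.map_tmul]
          exact hD)
    exact congrArg AlgHom.toLinearMap this
  · have := aux_TT_ext R he h1 (E.comp (RingQuot.mkAlgHom k (relU R))) (counitT R) (by
          rw [aux_iT_g R he]
          rw [← aux_iT_g R he, AlgHom.comp_apply]
          refine Eq.trans hE ?_
          rw [aux_iT_g R he]
          simp [counitT])
    exact congrArg AlgHom.toLinearMap this
  · set S := Algebra.adjoin k {qU R ((0 : k), (1 : k))} with hS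
    have hm : qU R ((0 : k), (1 : k)) ∈ S := Algebra.subset_adjoin rfl
    obtain ⟨f, hf⟩ := aux_exists R hc he h1 hl (⟨_, hm⟩ : S) (Subtype.ext hi)
    have hid : S.val.comp f = AlgHom.id k (UC R) := by
      apply aux_UC_ext R he h1
      rw [AlgHom.comp_apply, hf]
      rfl
    rw [eq_top_iff]
    intro x _
    have hx : S.val (f x) = x := DFunLike.congr_fun hid x
    rw [← hx]
    exact (f x).2
  · obtain ⟨f, hf⟩ := aux_exists R hc he h1 hl ((1 : k), (0 : k)) (by simp)
    set G := qU R ((0 : k), (1 : k)) with hG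
    let l : (k × k) →ₗ[k] UC R :=
      LinearMap.toSpanSingleton k _ G ∘ₗ LinearMap.fst k k k +
      LinearMap.toSpanSingleton k _ (1 - G) ∘ₗ LinearMap.snd k k k
    have hl' : ∀ x : k × k, l x = x.1 • G + x.2 • (1 - G) := fun x => by simp [l]
    let h : (k × k) →ₐ[k] UC R := AlgHom.ofLinearMap l (by simp [hl']) (by
      intro x y
      simp only [hl', Prod.fst_mul, Prod.snd_mul, add_mul, mul_add, smul_mul_smul_comm,
        mul_sub, sub_mul, hi, mul_one, one_mul, sub_self, smul_zero, sub_zero, add_zero,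
        zero_add])
    have hh : ∀ x : k × k, h x = x.1 • G + x.2 • (1 - G) := hl'
    refine ⟨AlgEquiv.ofAlgHom f h ?_ ?_⟩
    · apply AlgHom.ext
      intro x
      rw [AlgHom.comp_apply, hh]
      apply Prod.ext <;> simp [hf]
    · apply aux_UC_ext R he h1
      rw [AlgHom.comp_apply, ← hG, hf, hh]
      simp
end
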